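/- arXiv:1401.7108 — 3 statements merged into one kernel-verified Lean document; each statement's English description precedes it below -/
import Mathlib

section
/- In the Setup below, fix an integer N ≥ 0 and constants C_j > 0 with ‖A_{j,k}‖ ≤ C_j and ‖B_{j,k}‖ ≤ C_j for all k, and let C ≥ Σ_{j=1}^{N} C_j. Define R_k := χ_k⁻¹·Σ_{j=0}^{N} k^{−j} A_{j,k}. Then: (1) R_k ∈ B_k(C) for every k; (2) there exist D > 0 and k₀ such that for all k ≥ k₀, R_k is invertible and ‖χ_k⁻¹ R_k⁻¹ − Σ_{j=0}^{N} k^{−j} B_{j,k}‖ ≤ D·k^{−N−1}. -/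
/-!
Write `S k = χ k • R k = ∑_{j ≤ N} k⁻ʲ • A k j` and `T k = ∑_{j ≤ N} k⁻ʲ • B k j`. Part (1) is the
triangle inequality, since the `j = 0` term of `S k` is the identity.

For part (2), the recursion for `B` says that `∑ k⁻ʲ • B k j` is the left inverse of
`∑ k⁻ʲ • A k j` as a formal power series in `k⁻¹`. Hence in the product `T k * S k` of the truncated
series all terms of order between `1` and `N` cancel, and `‖T k * S k - 1‖ = O(k^{-N-1})`
(`norm_trunc_mul_trunc_sub_one_le`). By (1), `‖S k - 1‖ ≤ 1/2` for large `k`, so `S k` is invertible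
with `‖(S k)⁻¹‖ ≤ 2` (`isUnit_and_norm_inverse_le`). The estimate follows from
`(S k)⁻¹ - T k = (1 - T k * S k) * (S k)⁻¹` and `(χ k)⁻¹ • (R k)⁻¹ = (S k)⁻¹`.
-/

section TruncatedSeries

variable {𝓐 : Type*} [NormedRing 𝓐] [NormedAlgebra ℝ 𝓐]

theorem norm_trunc_sub_one_le (a : ℕ → 𝓐) (c : ℕ → ℝ) (h0 : a 0 = 1)
    (ha : ∀ j, ‖a j‖ ≤ c j) (N : ℕ) {x : ℝ} (hx0 : 0 ≤ x) (hx1 : x ≤ 1) :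
    ‖∑ j ∈ Finset.range (N + 1), x ^ j • a j - 1‖ ≤ (∑ j ∈ Finset.Icc 1 N, c j) * x := by
  have hsplit : ∑ j ∈ Finset.range (N + 1), x ^ j • a j - 1
      = ∑ j ∈ Finset.Icc 1 N, x ^ j • a j := by
    rw [Finset.range_eq_Ico, Finset.sum_eq_sum_Ico_succ_bot (Nat.succ_pos N), pow_zero, one_smul,
      h0, add_sub_cancel_left]
    rfl
  rw [hsplit, Finset.sum_mul]
  refine norm_sum_le_of_le _ fun j hj => ?_
  rw [norm_smul, norm_pow, Real.norm_of_nonneg hx0, mul_comm]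
  have hxj : x ^ j ≤ x :=
    pow_le_of_le_one hx0 hx1 (Nat.one_le_iff_ne_zero.mp (Finset.mem_Icc.mp hj).1)
  exact mul_le_mul (ha j) hxj (by positivity) ((norm_nonneg _).trans (ha j))

/-- If `∑ bᵢ xⁱ` is the formal left inverse of `∑ aⱼ xʲ`, the product of the truncations at order
`N` differs from `1` only by the terms of total degree greater than `N`. -/
theorem norm_trunc_mul_trunc_sub_one_le (a b : ℕ → 𝓐) (c : ℕ → ℝ) (ha0 : a 0 = 1) (hb0 : b 0 = 1)
    (hb : ∀ j, b (j + 1) = -∑ i ∈ Finset.range (j + 1), b i * a (j + 1 - i))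
    (hac : ∀ j, ‖a j‖ ≤ c j) (hbc : ∀ j, ‖b j‖ ≤ c j) (N : ℕ) {x : ℝ}
    (hx0 : 0 ≤ x) (hx1 : x ≤ 1) :
    ‖(∑ i ∈ Finset.range (N + 1), x ^ i • b i) * (∑ j ∈ Finset.range (N + 1), x ^ j • a j) - 1‖
      ≤ (∑ p ∈ Finset.range (N + 1) ×ˢ Finset.range (N + 1), c p.1 * c p.2) * x ^ (N + 1) := by
  have hc : ∀ j, 0 ≤ c j := fun j => (norm_nonneg _).trans (hac j)
  have hcauchy : ∀ m, ∑ p ∈ Finset.HasAntidiagonal.antidiagonal (m + 1), b p.1 * a p.2 = 0 := by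
    intro m
    rw [Finset.Nat.sum_antidiagonal_eq_sum_range_succ (fun i j => b i * a j),
      Finset.sum_range_succ, hb m, Nat.sub_self, ha0, mul_one, add_neg_cancel]
  set P := Finset.range (N + 1) ×ˢ Finset.range (N + 1) with hP
  set f : ℕ × ℕ → 𝓐 := fun p => x ^ (p.1 + p.2) • (b p.1 * a p.2) with hf
  have hprod : (∑ i ∈ Finset.range (N + 1), x ^ i • b i) *
      (∑ j ∈ Finset.range (N + 1), x ^ j • a j) = ∑ p ∈ P, f p := by
    rw [Finset.sum_mul_sum, hP, Finset.sum_product]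
    refine Finset.sum_congr rfl fun i _ => Finset.sum_congr rfl fun j _ => ?_
    simp only [hf]
    rw [smul_mul_smul_comm, pow_add]
  have hlow : ∑ p ∈ P with p.1 + p.2 ≤ N, f p = 1 := by
    rw [← Finset.sum_fiberwise_of_maps_to (t := Finset.range (N + 1)) (g := fun p => p.1 + p.2)
      (fun p hp => by simp at hp ⊢; omega)]
    have hfib : ∀ m ∈ Finset.range (N + 1),
        ∑ p ∈ (P.filter fun p => p.1 + p.2 ≤ N) with p.1 + p.2 = m, f p
          = x ^ m • ∑ p ∈ Finset.HasAntidiagonal.antidiagonal m, b p.1 * a p.2 := by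
      intro m hm
      have hset : ((P.filter fun p => p.1 + p.2 ≤ N).filter fun p => p.1 + p.2 = m)
          = Finset.HasAntidiagonal.antidiagonal m := by
        ext p
        simp only [hP, Finset.mem_filter, Finset.mem_product, Finset.mem_range,
          Finset.HasAntidiagonal.mem_antidiagonal] at hm ⊢
        omega
      rw [hset, Finset.smul_sum]
      refine Finset.sum_congr rfl fun p hp => ?_
      simp only [hf, Finset.HasAntidiagonal.mem_antidiagonal.mp hp]
    rw [Finset.sum_congr rfl hfib, Finset.sum_range_succ']
    simp [hcauchy, ha0, hb0]
  rw [hprod, ← Finset.sum_filter_add_sum_filter_not P (fun p => p.1 + p.2 ≤ N), hlow,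
    add_sub_cancel_left, Finset.sum_mul]
  calc ‖∑ p ∈ P with ¬ p.1 + p.2 ≤ N, f p‖
      ≤ ∑ p ∈ P with ¬ p.1 + p.2 ≤ N, c p.1 * c p.2 * x ^ (N + 1) := by
        refine norm_sum_le_of_le _ fun p hp => ?_
        have hdeg : N + 1 ≤ p.1 + p.2 := by
          have := (Finset.mem_filter.mp hp).2
          omega
        simp only [hf]
        rw [norm_smul, norm_pow, Real.norm_of_nonneg hx0, mul_comm]
        exact mul_le_mul ((norm_mul_le _ _).trans
            (mul_le_mul (hbc _) (hac _) (norm_nonneg _) (hc _)))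
          (pow_le_pow_of_le_one hx0 hx1 hdeg) (by positivity) (mul_nonneg (hc _) (hc _))
    _ ≤ ∑ p ∈ P, c p.1 * c p.2 * x ^ (N + 1) :=
        Finset.sum_le_sum_of_subset_of_nonneg (Finset.filter_subset _ _) fun p _ _ =>
          mul_nonneg (mul_nonneg (hc _) (hc _)) (by positivity)

end TruncatedSeries

/-- Only `‖1‖ ≤ 1` is assumed, so that the operators on the zero space are covered. -/
theorem isUnit_and_norm_inverse_le {𝓐 : Type*} [NormedRing 𝓐] [CompleteSpace 𝓐]
    (hone : ‖(1 : 𝓐)‖ ≤ 1) {s : 𝓐} (hs : ‖s - 1‖ ≤ 1 / 2) :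
    IsUnit s ∧ ‖Ring.inverse s‖ ≤ 2 := by
  have hu : IsUnit s := by
    have h := isUnit_one_sub_of_norm_lt_one (x := 1 - s) (by rw [norm_sub_rev]; linarith)
    rwa [sub_sub_cancel] at h
  refine ⟨hu, ?_⟩
  have hid : Ring.inverse s = 1 - (s - 1) * Ring.inverse s := by
    rw [sub_mul, Ring.mul_inverse_cancel s hu, one_mul, sub_sub_cancel]
  have h1 : ‖Ring.inverse s‖ ≤ ‖(1 : 𝓐)‖ + ‖(s - 1) * Ring.inverse s‖ := by
    conv_lhs => rw [hid]
    exact norm_sub_le _ _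
  have h2 : ‖(s - 1) * Ring.inverse s‖ ≤ 1 / 2 * ‖Ring.inverse s‖ :=
    (norm_mul_le _ _).trans (mul_le_mul_of_nonneg_right hs (norm_nonneg _))
  linarith

/-- In the Setup (see hypotheses), fix `N ≥ 0` and constants `Cs j > 0` bounding
`‖A k j‖, ‖B k j‖`, and let `C ≥ Σ_{j=1}^{N} Cs j`.  With
`R k := (χ k)⁻¹ • Σ_{j=0}^{N} k^{−j} • A k j` we have:
(1) `R k ∈ B_k(C)`, i.e. `‖χ k • R k − Id‖ ≤ C·k⁻¹`, for every `k ≥ 1`;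
(2) there are `D > 0` and `k₀` such that for all `k ≥ k₀`, `R k` is invertible and
`‖(χ k)⁻¹ • (R k)⁻¹ − Σ_{j=0}^{N} k^{−j} • B k j‖ ≤ D·k^{−N−1}`. -/
theorem stmt3 (V : ℕ → Type*) [∀ k, NormedAddCommGroup (V k)]
    [∀ k, InnerProductSpace ℂ (V k)] [∀ k, FiniteDimensional ℂ (V k)]
    (α : ∀ k, V k →L[ℂ] V k) (M : ℝ) (hM : 0 < M) (hα : ∀ k, ‖α k‖ ≤ M)
    (n : ℕ) (hn : 1 ≤ n) (c₁ c₂ E : ℝ) (hc₁ : 0 < c₁) (hc₂ : 0 < c₂) (hE : 0 < E)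
    (χ : ℕ → ℝ) (hχ : ∀ k : ℕ, 0 < k → c₁ * (k : ℝ) ^ n ≤ χ k ∧ χ k ≤ c₂ * (k : ℝ) ^ n)
    (ε : ℕ → ℝ) (hε : ∀ k, 0 < ε k ∧ ε k ≤ E)
    (A B : ∀ k : ℕ, ℕ → (V k →L[ℂ] V k))
    (hA0 : ∀ k, A k 0 = 1) (hB0 : ∀ k, B k 0 = 1)
    (hArec : ∀ k j, A k (j + 1) = ε k • ∑ i ∈ Finset.range (j + 1),
      (α k * (A k i * ContinuousLinearMap.adjoint (α k) * B k (j - i)) -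
        (A k i * ContinuousLinearMap.adjoint (α k) * B k (j - i)) * α k))
    (hBrec : ∀ k j, B k (j + 1) = -∑ i ∈ Finset.range (j + 1), B k i * A k (j + 1 - i))
    (N : ℕ) (Cs : ℕ → ℝ) (hCs : ∀ j, 0 < Cs j)
    (hCsA : ∀ (k : ℕ) (j : ℕ), 0 < k → ‖A k j‖ ≤ Cs j ∧ ‖B k j‖ ≤ Cs j)
    (C : ℝ) (hC : C ≥ ∑ j ∈ Finset.Icc 1 N, Cs j)
    (R : ∀ k : ℕ, V k →L[ℂ] V k)
    (hR : ∀ k, R k = (χ k)⁻¹ • ∑ j ∈ Finset.range (N + 1), ((k : ℝ) ^ j)⁻¹ • A k j) :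
    (∀ k : ℕ, 0 < k → ‖χ k • R k - 1‖ ≤ C * (k : ℝ)⁻¹) ∧
    ∃ D : ℝ, 0 < D ∧ ∃ k₀ : ℕ, ∀ k ≥ k₀, IsUnit (R k) ∧
      ‖(χ k)⁻¹ • Ring.inverse (R k) -
        ∑ j ∈ Finset.range (N + 1), ((k : ℝ) ^ j)⁻¹ • B k j‖ ≤ D * ((k : ℝ) ^ (N + 1))⁻¹ := by
  have hχ0 : ∀ k : ℕ, 0 < k → χ k ≠ 0 := fun k hk =>
    (lt_of_lt_of_le (mul_pos hc₁ (pow_pos (Nat.cast_pos.mpr hk) n)) (hχ k hk).1).ne'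
  have hx1 : ∀ k : ℕ, 0 < k → ((k : ℝ))⁻¹ ≤ 1 := fun k hk =>
    inv_le_one_of_one_le₀ (by exact_mod_cast hk)
  have hx0 : ∀ k : ℕ, 0 ≤ ((k : ℝ))⁻¹ := fun k => by positivity
  simp only [← inv_pow] at hR ⊢
  have hS : ∀ k : ℕ, 0 < k → χ k • R k = ∑ j ∈ Finset.range (N + 1), ((k : ℝ)⁻¹) ^ j • A k j :=
    fun k hk => by rw [hR, smul_inv_smul₀ (hχ0 k hk)]
  have hpart1 : ∀ k : ℕ, 0 < k → ‖χ k • R k - 1‖ ≤ C * (k : ℝ)⁻¹ := by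
    intro k hk
    rw [hS k hk]
    exact (norm_trunc_sub_one_le (A k) Cs (hA0 k) (fun j => (hCsA k j hk).1) N (hx0 k)
      (hx1 k hk)).trans (mul_le_mul_of_nonneg_right hC (hx0 k))
  refine ⟨hpart1, ?_⟩
  set K := ∑ p ∈ Finset.range (N + 1) ×ˢ Finset.range (N + 1), Cs p.1 * Cs p.2 with hK
  have hKpos : 0 < K :=
    Finset.sum_pos (fun p _ => mul_pos (hCs _) (hCs _)) ⟨(0, 0), by simp⟩
  refine ⟨2 * K, by positivity, max 1 ⌈2 * C⌉₊, fun k hk => ?_⟩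
  have hk0 : 0 < k := lt_of_lt_of_le Nat.one_pos ((le_max_left _ _).trans hk)
  have hkC : 2 * C ≤ k := (Nat.le_ceil _).trans (by exact_mod_cast (le_max_right _ _).trans hk)
  have hkR : (0 : ℝ) < k := Nat.cast_pos.mpr hk0
  have : CompleteSpace (V k) := FiniteDimensional.complete ℂ (V k)
  have hhalf : ‖χ k • R k - 1‖ ≤ 1 / 2 := by
    refine (hpart1 k hk0).trans ?_
    rw [← div_eq_mul_inv, div_le_iff₀ hkR]
    linarith
  obtain ⟨hSu, hSinv⟩ := isUnit_and_norm_inverse_le ContinuousLinearMap.norm_id_le hhalf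
  set S := χ k • R k with hSdef
  have hRS : R k = (χ k)⁻¹ • S := by rw [hSdef, inv_smul_smul₀ (hχ0 k hk0)]
  have hleft : (χ k • Ring.inverse S) * R k = 1 := by
    rw [hRS, smul_mul_smul_comm, mul_inv_cancel₀ (hχ0 k hk0), one_smul,
      Ring.inverse_mul_cancel S hSu]
  have hright : R k * (χ k • Ring.inverse S) = 1 := by
    rw [hRS, smul_mul_smul_comm, inv_mul_cancel₀ (hχ0 k hk0), one_smul,
      Ring.mul_inverse_cancel S hSu]
  have hRinv : Ring.inverse (R k) = χ k • Ring.inverse S :=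
    Ring.inverse_unit (⟨R k, χ k • Ring.inverse S, hright, hleft⟩ : (V k →L[ℂ] V k)ˣ)
  refine ⟨⟨⟨R k, χ k • Ring.inverse S, hright, hleft⟩, rfl⟩, ?_⟩
  rw [hRinv, inv_smul_smul₀ (hχ0 k hk0)]
  have hTS := norm_trunc_mul_trunc_sub_one_le (A k) (B k) Cs (hA0 k) (hB0 k) (hBrec k)
    (fun j => (hCsA k j hk0).1) (fun j => (hCsA k j hk0).2) N (hx0 k) (hx1 k hk0)
  rw [← hS k hk0, ← hSdef, ← hK] at hTS
  set T := ∑ j ∈ Finset.range (N + 1), ((k : ℝ)⁻¹) ^ j • B k j with hT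
  have hdiff : Ring.inverse S - T = (1 - T * S) * Ring.inverse S := by
    rw [sub_mul, one_mul, mul_assoc, Ring.mul_inverse_cancel S hSu, mul_one]
  rw [hdiff]
  calc ‖(1 - T * S) * Ring.inverse S‖ ≤ ‖1 - T * S‖ * ‖Ring.inverse S‖ := norm_mul_le _ _
    _ ≤ (K * ((k : ℝ)⁻¹) ^ (N + 1)) * 2 := by
        rw [norm_sub_rev]
        exact mul_le_mul hTS hSinv (norm_nonneg _) (by positivity)
    _ = 2 * K * ((k : ℝ)⁻¹) ^ (N + 1) := by ring
end

section
/- In the Setup below, fix an integer N ≥ 0 and define R_k := χ_k⁻¹·Σ_{j=0}^{N} k^{−j} A_{j,k}. Then there exist D > 0 and k₀ such that for all k ≥ k₀ the operator R_k is invertible and ‖χ_k R_k − Id − ε_k k⁻¹·[α_k, R_k β_k R_k⁻¹]‖ ≤ D·k^{−N−1}. -/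
/-!
Put `t = 1/k`, `S = Σ_{j ≤ N} t^j A_j` (so `R = χ⁻¹ S`) and `T = Σ_{j ≤ N} t^j B_j`. The recursion
for `B` says that the formal power series `Σ t^j B_j` is a left inverse of `Σ t^j A_j`, and the
recursion for `A` says that these formal series solve `S = 1 + ε t [α, S β S⁻¹]`. After truncation
at order `N` both identities hold up to `O(t^(N+1))`: the discarded part of a product of two
truncated series consists of terms of total degree `> N` (`norm_double_sum_sub_diag_le`). For small
`t` one has `‖1 - S‖ ≤ 1/2`, so `S` is invertible with `‖S⁻¹‖ ≤ 2`, and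
`S⁻¹ - T = (1 - T S) S⁻¹ = O(t^(N+1))`. All constants depend only on `N`, `M`, `E` and a bound for
the `A_j`, `B_j` with `j ≤ N + 1` that is uniform in `k` (`exists_uniform_bound`); the estimate
for a single `k` is `approximate_solution`. The scalar `χ` cancels in `R β R⁻¹ = S β S⁻¹`.
-/

/-- A square double sum with weights `t^(i+j)` differs from its part of total degree `< n`, summed
along antidiagonals, by `O(t^n)`. -/
lemma norm_double_sum_sub_diag_le {F : Type*} [NormedAddCommGroup F] [NormedSpace ℝ F]
    (f : ℕ → ℕ → F) (n : ℕ) (L t : ℝ) (ht0 : 0 ≤ t) (ht1 : t ≤ 1)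
    (hf : ∀ i < n, ∀ j < n, ‖f i j‖ ≤ L) :
    ‖∑ i ∈ Finset.range n, ∑ j ∈ Finset.range n, t ^ (i + j) • f i j -
      ∑ m ∈ Finset.range n, t ^ m • ∑ i ∈ Finset.range (m + 1), f i (m - i)‖
      ≤ (n : ℝ) ^ 2 * L * t ^ n := by
  have hdiag : ∑ m ∈ Finset.range n, t ^ m • ∑ i ∈ Finset.range (m + 1), f i (m - i) =
      ∑ i ∈ Finset.range n, ∑ j ∈ Finset.range (n - i), t ^ (i + j) • f i j := by
    rw [← Finset.sum_range_diag_flip n (fun i j => t ^ (i + j) • f i j)]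
    refine Finset.sum_congr rfl fun m _ => ?_
    rw [Finset.smul_sum]
    refine Finset.sum_congr rfl fun i hi => ?_
    rw [Nat.add_sub_cancel' (Nat.lt_succ_iff.mp (Finset.mem_range.mp hi))]
  rw [hdiag, ← Finset.sum_sub_distrib]
  have hrow : ∀ i ∈ Finset.range n,
      ‖∑ j ∈ Finset.range n, t ^ (i + j) • f i j -
        ∑ j ∈ Finset.range (n - i), t ^ (i + j) • f i j‖ ≤ n * (L * t ^ n) := by
    intro i hi
    have hi' := Finset.mem_range.mp hi
    have hL : 0 ≤ L := (norm_nonneg _).trans (hf i hi' i hi')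
    have hsub : Finset.range (n - i) ⊆ Finset.range n :=
      Finset.range_subset_range.mpr (Nat.sub_le _ _)
    rw [← Finset.sum_sdiff hsub, add_sub_cancel_right]
    refine (norm_sum_le_of_le (f := fun j => t ^ (i + j) • f i j)
      (n := fun _ => L * t ^ n) _ fun j hj => ?_).trans ?_
    · simp only [Finset.mem_sdiff, Finset.mem_range, not_lt] at hj
      rw [norm_smul, Real.norm_of_nonneg (pow_nonneg ht0 _), mul_comm]
      exact mul_le_mul (hf i hi' j hj.1) (pow_le_pow_of_le_one ht0 ht1 (by omega))
        (pow_nonneg ht0 _) hL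
    · rw [Finset.sum_const, nsmul_eq_mul]
      refine mul_le_mul_of_nonneg_right ?_ (mul_nonneg hL (pow_nonneg ht0 _))
      exact_mod_cast (Finset.card_le_card Finset.sdiff_subset).trans (Finset.card_range n).le
  refine (norm_sum_le_of_le _ hrow).trans (le_of_eq ?_)
  rw [Finset.sum_const, Finset.card_range, nsmul_eq_mul]
  ring

/-- The commutator with `a` is bounded by `2‖a‖`. -/
lemma norm_commutator_le {𝔸 : Type*} [NormedRing 𝔸] (a x : 𝔸) (M L : ℝ) (ha : ‖a‖ ≤ M)
    (hx : ‖x‖ ≤ L) : ‖a * x - x * a‖ ≤ 2 * M * L := by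
  have hM : 0 ≤ M := (norm_nonneg _).trans ha
  have hL : 0 ≤ L := (norm_nonneg _).trans hx
  have h1 : ‖a * x‖ ≤ M * L := norm_mul_le_of_le ha hx
  have h2 : ‖x * a‖ ≤ L * M := norm_mul_le_of_le hx ha
  calc ‖a * x - x * a‖ ≤ ‖a * x‖ + ‖x * a‖ := norm_sub_le _ _
    _ ≤ 2 * M * L := by linarith

/-- The estimate at a single `k`, in a Banach algebra, with `t` in the role of `1/k`. -/
lemma approximate_solution {𝔸 : Type*} [NormedRing 𝔸] [NormedAlgebra ℝ 𝔸] [CompleteSpace 𝔸]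
    (h1 : ‖(1 : 𝔸)‖ ≤ 1) (a b : 𝔸) (A B : ℕ → 𝔸) (ε t K M E : ℝ) (N : ℕ)
    (ha : ‖a‖ ≤ M) (hb : ‖b‖ ≤ M) (hε0 : 0 ≤ ε) (hεE : ε ≤ E)
    (hA0 : A 0 = 1) (hB0 : B 0 = 1)
    (hArec : ∀ j, A (j + 1) = ε • ∑ i ∈ Finset.range (j + 1),
      (a * (A i * b * B (j - i)) - (A i * b * B (j - i)) * a))
    (hBrec : ∀ j, B (j + 1) = -∑ i ∈ Finset.range (j + 1), B i * A (j + 1 - i))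
    (hAK : ∀ j ≤ N + 1, ‖A j‖ ≤ K) (hBK : ∀ j ≤ N + 1, ‖B j‖ ≤ K)
    (ht0 : 0 ≤ t) (ht1 : t ≤ 1) (htK : N * K * t ≤ 1 / 2)
    (S : 𝔸) (hS : S = ∑ j ∈ Finset.range (N + 1), t ^ j • A j) :
    IsUnit S ∧ ‖S - 1 - (ε * t) • (a * (S * b * Ring.inverse S) - (S * b * Ring.inverse S) * a)‖
      ≤ (K + 10 * E * M ^ 2 * ((N + 1 : ℕ) : ℝ) ^ 2 * K ^ 2) * t ^ (N + 1) := by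
  have hK : 0 ≤ K := (norm_nonneg _).trans (hAK 0 (Nat.zero_le _))
  have hM : 0 ≤ M := (norm_nonneg _).trans ha
  have hE : 0 ≤ E := hε0.trans hεE
  have hS1 : ‖1 - S‖ ≤ 1 / 2 := by
    rw [hS, Finset.sum_range_succ', hA0, pow_zero, one_smul, norm_sub_rev, add_sub_cancel_right]
    refine (norm_sum_le_of_le (n := fun _ => K * t) _ fun j hj => ?_).trans ?_
    · rw [norm_smul, Real.norm_of_nonneg (pow_nonneg ht0 _), mul_comm]
      refine mul_le_mul (hAK _ ?_) ?_ (pow_nonneg ht0 _) hK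
      · have := Finset.mem_range.mp hj
        omega
      · exact pow_le_of_le_one ht0 ht1 (Nat.succ_ne_zero j)
    · rw [Finset.sum_const, Finset.card_range, nsmul_eq_mul]
      linarith
  have hu : IsUnit S := by
    have h := isUnit_one_sub_of_norm_lt_one (x := 1 - S) (by linarith)
    rwa [sub_sub_cancel] at h
  refine ⟨hu, ?_⟩
  set I := Ring.inverse S with hI
  have hSI : S * I = 1 := Ring.mul_inverse_cancel S hu
  have hI2 : ‖I‖ ≤ 2 := by
    have h : I = 1 + (1 - S) * I := by rw [sub_mul, hSI, one_mul]; abel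
    have h' : ‖I‖ ≤ 1 + 1 / 2 * ‖I‖ := by
      calc ‖I‖ = ‖1 + (1 - S) * I‖ := by rw [← h]
        _ ≤ ‖(1 : 𝔸)‖ + ‖(1 - S) * I‖ := norm_add_le _ _
        _ ≤ 1 + 1 / 2 * ‖I‖ := add_le_add h1 (norm_mul_le_of_le hS1 le_rfl)
    linarith
  have hS2 : ‖S‖ ≤ 2 := by
    calc ‖S‖ = ‖1 - (1 - S)‖ := by rw [sub_sub_cancel]
      _ ≤ ‖(1 : 𝔸)‖ + ‖1 - S‖ := norm_sub_le _ _
      _ ≤ 2 := by linarith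
  set T := ∑ j ∈ Finset.range (N + 1), t ^ j • B j with hT
  set G : ℕ → 𝔸 := fun m => ∑ i ∈ Finset.range (m + 1), A i * b * B (m - i) with hG
  set Q : ℝ := ((N + 1 : ℕ) : ℝ) ^ 2 * K ^ 2 * t ^ (N + 1) with hQ
  have hQ0 : 0 ≤ Q := by positivity
  have hTS : ‖T * S - 1‖ ≤ Q := by
    have h := norm_double_sum_sub_diag_le (fun i j => B i * A j) (N + 1) (K * K) t ht0 ht1
      (fun i hi j hj => norm_mul_le_of_le (hBK i hi.le) (hAK j hj.le))
    have e1 : ∑ i ∈ Finset.range (N + 1), ∑ j ∈ Finset.range (N + 1), t ^ (i + j) • (B i * A j)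
        = T * S := by
      rw [hS, hT, Finset.sum_mul_sum]
      simp only [smul_mul_smul_comm, pow_add]
    have e2 : ∑ m ∈ Finset.range (N + 1), t ^ m • ∑ i ∈ Finset.range (m + 1), B i * A (m - i)
        = 1 := by
      rw [Finset.sum_range_succ', Finset.sum_eq_zero]
      · simp [hA0, hB0]
      · intro m _
        rw [Finset.sum_range_succ, Nat.sub_self, hA0, mul_one, hBrec m, add_neg_cancel, smul_zero]
    rw [e1, e2] at h
    refine h.trans (le_of_eq ?_)
    rw [hQ]; ring
  have hSbT : ‖S * b * T - ∑ m ∈ Finset.range (N + 1), t ^ m • G m‖ ≤ M * Q := by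
    have h := norm_double_sum_sub_diag_le (fun i j => A i * b * B j) (N + 1) (K * M * K) t ht0 ht1
      (fun i hi j hj => norm_mul_le_of_le (norm_mul_le_of_le (hAK i hi.le) hb) (hBK j hj.le))
    have e1 : ∑ i ∈ Finset.range (N + 1), ∑ j ∈ Finset.range (N + 1),
        t ^ (i + j) • (A i * b * B j) = S * b * T := by
      rw [hS, hT, Finset.sum_mul, Finset.sum_mul_sum]
      simp only [smul_mul_assoc _ _ b, smul_mul_smul_comm, pow_add]
    rw [e1] at h
    refine h.trans (le_of_eq ?_)
    rw [hQ]; ring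
  have hIT : ‖I - T‖ ≤ Q * 2 := by
    have h : I - T = -((T * S - 1) * I) := by
      rw [sub_mul, mul_assoc, hSI, mul_one, one_mul]; abel
    rw [h, norm_neg]
    exact norm_mul_le_of_le hTS hI2
  set W := S * b * I with hW
  set P := ∑ m ∈ Finset.range (N + 1), t ^ m • G m with hP
  have hWP : ‖W - P‖ ≤ 5 * M * Q := by
    have h : W - P = S * b * (I - T) + (S * b * T - P) := by rw [hW, mul_sub]; abel
    have h' : ‖S * b * (I - T)‖ ≤ 2 * M * (Q * 2) :=
      norm_mul_le_of_le (norm_mul_le_of_le hS2 hb) hIT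
    rw [h]
    refine (norm_add_le _ _).trans ?_
    linarith
  -- The recursion for `A` in generating-function form; the top term `t^(N+1) A_(N+1)` is not in `S`.
  have hmain : (ε * t) • (a * P - P * a) = S - 1 + t ^ (N + 1) • A (N + 1) := by
    have e : S + t ^ (N + 1) • A (N + 1) = ∑ j ∈ Finset.range (N + 1 + 1), t ^ j • A j := by
      rw [Finset.sum_range_succ _ (N + 1), hS]
    have e' : S - 1 + t ^ (N + 1) • A (N + 1)
        = ∑ j ∈ Finset.range (N + 1), t ^ (j + 1) • A (j + 1) := by
      rw [sub_add_eq_add_sub, e, Finset.sum_range_succ', hA0, pow_zero, one_smul,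
        add_sub_cancel_right]
    rw [e', hP, Finset.mul_sum, Finset.sum_mul, ← Finset.sum_sub_distrib, Finset.smul_sum]
    refine Finset.sum_congr rfl fun m _ => ?_
    rw [hArec m, Finset.sum_sub_distrib, ← Finset.mul_sum, ← Finset.sum_mul, mul_smul_comm,
      smul_mul_assoc, ← smul_sub, smul_smul, smul_smul]
    congr 1
    ring
  have hfin : S - 1 - (ε * t) • (a * W - W * a)
      = -(t ^ (N + 1) • A (N + 1)) - (ε * t) • (a * (W - P) - (W - P) * a) := by
    have h : a * (W - P) - (W - P) * a = (a * W - W * a) - (a * P - P * a) := by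
      rw [mul_sub, sub_mul]; abel
    rw [h, smul_sub _ (a * W - W * a), hmain]
    abel
  rw [hfin]
  refine (norm_sub_le _ _).trans ?_
  rw [norm_neg, norm_smul, norm_smul, Real.norm_of_nonneg (pow_nonneg ht0 _),
    Real.norm_of_nonneg (mul_nonneg hε0 ht0)]
  have b1 : t ^ (N + 1) * ‖A (N + 1)‖ ≤ t ^ (N + 1) * K :=
    mul_le_mul_of_nonneg_left (hAK _ le_rfl) (pow_nonneg ht0 _)
  have b2 : ε * t * ‖a * (W - P) - (W - P) * a‖ ≤ E * 1 * (2 * M * (5 * M * Q)) :=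
    mul_le_mul (mul_le_mul hεE ht1 ht0 hE) (norm_commutator_le a _ M _ ha hWP)
      (norm_nonneg _) (by linarith)
  refine (add_le_add b1 b2).trans (le_of_eq ?_)
  rw [hQ]; ring

/-- The coefficients up to any fixed order are bounded by a constant depending only on the order,
`M` and `E`; the family of algebras is indexed by `k`. -/
lemma exists_uniform_bound {𝔸 : ℕ → Type*} [∀ k, NormedRing (𝔸 k)] [∀ k, NormedAlgebra ℝ (𝔸 k)]
    (h1 : ∀ k, ‖(1 : 𝔸 k)‖ ≤ 1) (a b : ∀ k, 𝔸 k) (A B : ∀ k, ℕ → 𝔸 k) (ε : ℕ → ℝ) (M E : ℝ)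
    (ha : ∀ k, ‖a k‖ ≤ M) (hb : ∀ k, ‖b k‖ ≤ M) (hε : ∀ k, 0 < ε k ∧ ε k ≤ E)
    (hA0 : ∀ k, A k 0 = 1) (hB0 : ∀ k, B k 0 = 1)
    (hArec : ∀ k j, A k (j + 1) = ε k • ∑ i ∈ Finset.range (j + 1),
      (a k * (A k i * b k * B k (j - i)) - (A k i * b k * B k (j - i)) * a k))
    (hBrec : ∀ k j, B k (j + 1) = -∑ i ∈ Finset.range (j + 1), B k i * A k (j + 1 - i)) (n : ℕ) :
    ∃ K : ℝ, 0 < K ∧ ∀ k, ∀ j ≤ n, ‖A k j‖ ≤ K ∧ ‖B k j‖ ≤ K := by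
  have hM : 0 ≤ M := (norm_nonneg _).trans (ha 0)
  have hE : 0 ≤ E := (hε 0).1.le.trans (hε 0).2
  induction n with
  | zero =>
    refine ⟨1, one_pos, fun k j hj => ?_⟩
    rw [Nat.le_zero.mp hj, hA0, hB0]
    exact ⟨h1 k, h1 k⟩
  | succ n ih =>
    obtain ⟨K, hK, hAB⟩ := ih
    set K₁ : ℝ := E * ((n + 1 : ℕ) * (2 * M * (K * M * K))) with hK₁
    have hK₁0 : 0 ≤ K₁ := by positivity
    set K₂ : ℝ := (n + 1 : ℕ) * (K * (K + K₁)) with hK₂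
    have hK₂0 : 0 ≤ K₂ := by positivity
    have hAn : ∀ k, ‖A k (n + 1)‖ ≤ K₁ := by
      intro k
      rw [hArec, norm_smul, Real.norm_of_nonneg (hε k).1.le]
      refine mul_le_mul (hε k).2 ?_ (norm_nonneg _) hE
      refine (norm_sum_le_of_le (n := fun _ => 2 * M * (K * M * K)) _ fun i hi => ?_).trans ?_
      · have hi' := Finset.mem_range.mp hi
        exact norm_commutator_le _ _ _ _ (ha k) (norm_mul_le_of_le (norm_mul_le_of_le
          (hAB k i (by omega)).1 (hb k)) (hAB k (n - i) (by omega)).2)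
      · rw [Finset.sum_const, Finset.card_range, nsmul_eq_mul]
    have hA' : ∀ k, ∀ j ≤ n + 1, ‖A k j‖ ≤ K + K₁ := by
      intro k j hj
      rcases Nat.le_succ_iff.mp hj with h | h
      · linarith [(hAB k j h).1]
      · rw [h]; linarith [hAn k]
    have hBn : ∀ k, ‖B k (n + 1)‖ ≤ K₂ := by
      intro k
      rw [hBrec, norm_neg]
      refine (norm_sum_le_of_le (n := fun _ => K * (K + K₁)) _ fun i hi => ?_).trans ?_
      · have hi' := Finset.mem_range.mp hi
        exact norm_mul_le_of_le (hAB k i (by omega)).2 (hA' k _ (by omega))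
      · rw [Finset.sum_const, Finset.card_range, nsmul_eq_mul]
    refine ⟨K + K₁ + K₂, by linarith, fun k j hj => ⟨by linarith [hA' k j hj], ?_⟩⟩
    rcases Nat.le_succ_iff.mp hj with h | h
    · linarith [(hAB k j h).2]
    · rw [h]; linarith [hBn k]


/-- In the Setup (see hypotheses), fix `N ≥ 0` and define
`R k := (χ k)⁻¹ • Σ_{j=0}^{N} k^{−j} • A k j`.  Then there exist `D > 0` and `k₀` such that for
all `k ≥ k₀` the operator `R k` is invertible and
`‖χ k • R k − Id − ε k · k⁻¹ · [α k, R k ⬝ β k ⬝ (R k)⁻¹]‖ ≤ D·k^{−N−1}`,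
where `β k = (α k)*`. -/
theorem stmt4 (V : ℕ → Type*) [∀ k, NormedAddCommGroup (V k)]
    [∀ k, InnerProductSpace ℂ (V k)] [∀ k, FiniteDimensional ℂ (V k)]
    (α : ∀ k, V k →L[ℂ] V k) (M : ℝ) (hM : 0 < M) (hα : ∀ k, ‖α k‖ ≤ M)
    (n : ℕ) (hn : 1 ≤ n) (c₁ c₂ E : ℝ) (hc₁ : 0 < c₁) (hc₂ : 0 < c₂) (hE : 0 < E)
    (χ : ℕ → ℝ) (hχ : ∀ k : ℕ, 0 < k → c₁ * (k : ℝ) ^ n ≤ χ k ∧ χ k ≤ c₂ * (k : ℝ) ^ n)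
    (ε : ℕ → ℝ) (hε : ∀ k, 0 < ε k ∧ ε k ≤ E)
    (A B : ∀ k : ℕ, ℕ → (V k →L[ℂ] V k))
    (hA0 : ∀ k, A k 0 = 1) (hB0 : ∀ k, B k 0 = 1)
    (hArec : ∀ k j, A k (j + 1) = ε k • ∑ i ∈ Finset.range (j + 1),
      (α k * (A k i * ContinuousLinearMap.adjoint (α k) * B k (j - i)) -
        (A k i * ContinuousLinearMap.adjoint (α k) * B k (j - i)) * α k))
    (hBrec : ∀ k j, B k (j + 1) = -∑ i ∈ Finset.range (j + 1), B k i * A k (j + 1 - i))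
    (N : ℕ) (R : ∀ k : ℕ, V k →L[ℂ] V k)
    (hR : ∀ k, R k = (χ k)⁻¹ • ∑ j ∈ Finset.range (N + 1), ((k : ℝ) ^ j)⁻¹ • A k j) :
    ∃ D : ℝ, 0 < D ∧ ∃ k₀ : ℕ, ∀ k ≥ k₀, IsUnit (R k) ∧
      ‖χ k • R k - 1 - (ε k * (k : ℝ)⁻¹) •
        (α k * (R k * ContinuousLinearMap.adjoint (α k) * Ring.inverse (R k)) -
          (R k * ContinuousLinearMap.adjoint (α k) * Ring.inverse (R k)) * α k)‖ ≤
        D * ((k : ℝ) ^ (N + 1))⁻¹ := by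
  have h1 : ∀ k, ‖(1 : V k →L[ℂ] V k)‖ ≤ 1 := fun k => ContinuousLinearMap.norm_id_le
  have hβ : ∀ k, ‖ContinuousLinearMap.adjoint (α k)‖ ≤ M := fun k => by
    rw [LinearIsometryEquiv.norm_map]; exact hα k
  obtain ⟨K, hK, hAB⟩ := exists_uniform_bound h1 α (fun k => ContinuousLinearMap.adjoint (α k))
    A B ε M E hα hβ hε hA0 hB0 hArec hBrec (N + 1)
  obtain ⟨k₁, hk₁⟩ := exists_nat_ge (2 * (N * K))
  refine ⟨K + 10 * E * M ^ 2 * ((N + 1 : ℕ) : ℝ) ^ 2 * K ^ 2, by positivity, max 1 k₁,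
    fun k hk => ?_⟩
  have hk1 : 1 ≤ k := (le_max_left _ _).trans hk
  have hk0 : (0 : ℝ) < k := by exact_mod_cast hk1
  have hkK : 2 * (N * K) ≤ k := hk₁.trans (by exact_mod_cast (le_max_right _ _).trans hk)
  have hχ0 : χ k ≠ 0 :=
    ((mul_pos hc₁ (pow_pos hk0 n)).trans_le (hχ k hk1).1).ne'
  set S : V k →L[ℂ] V k := ∑ j ∈ Finset.range (N + 1), ((k : ℝ)⁻¹) ^ j • A k j with hS
  obtain ⟨hu, hbound⟩ := approximate_solution (h1 k) (α k) (ContinuousLinearMap.adjoint (α k))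
    (A k) (B k) (ε k) (k : ℝ)⁻¹ K M E N (hα k) (hβ k) (hε k).1.le (hε k).2 (hA0 k) (hB0 k)
    (hArec k) (hBrec k) (fun j hj => (hAB k j hj).1) (fun j hj => (hAB k j hj).2)
    (inv_nonneg.mpr hk0.le) (inv_le_one_of_one_le₀ (by exact_mod_cast hk1))
    (by rw [← div_eq_mul_inv, div_le_iff₀ hk0]; linarith) S hS
  have hRS : R k = (χ k)⁻¹ • S := by
    rw [hR, hS]; simp only [inv_pow]
  have hmul : R k * (χ k • Ring.inverse S) = 1 := by
    rw [hRS, smul_mul_smul_comm, inv_mul_cancel₀ hχ0, one_smul, Ring.mul_inverse_cancel S hu]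
  have hmul' : (χ k • Ring.inverse S) * R k = 1 := by
    rw [hRS, smul_mul_smul_comm, mul_inv_cancel₀ hχ0, one_smul, Ring.inverse_mul_cancel S hu]
  have hinv : Ring.inverse (R k) = χ k • Ring.inverse S :=
    Ring.inverse_unit (⟨R k, χ k • Ring.inverse S, hmul, hmul'⟩ : (V k →L[ℂ] V k)ˣ)
  have hconj : R k * ContinuousLinearMap.adjoint (α k) * Ring.inverse (R k)
      = S * ContinuousLinearMap.adjoint (α k) * Ring.inverse S := by
    rw [hinv, hRS, smul_mul_assoc, smul_mul_smul_comm, inv_mul_cancel₀ hχ0, one_smul]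
  refine ⟨⟨⟨R k, χ k • Ring.inverse S, hmul, hmul'⟩, rfl⟩, ?_⟩
  rw [hconj, hRS, smul_smul, mul_inv_cancel₀ hχ0, one_smul, ← inv_pow]
  exact hbound
end

section
/- In the Setup below, fix an integer N ≥ 1. There exists C₀ > 0, depending only on N, M, E, c₁, c₂ and n, such that for every C ≥ C₀ the following holds: if P_k ∈ B_k(C) satisfies the equation P_k = χ_k⁻¹·(Id + ε_k k⁻¹·[α_k, P_k β_k P_k⁻¹]) for all sufficiently large k (P_k being invertible for such k), then there exist D > 0 and k₀ such that ‖χ_k P_k − Σ_{j=0}^{N} k^{−j} A_{j,k}‖ ≤ D·k^{−N−1} for all k ≥ k₀. -/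
/-!
Put `Q = χ P` and `t = 1/k`. The equation becomes `Q = 1 + ε t [α, Q β Q⁻¹]`, and the recursions for
`A` and `B` say that `S = ∑ t^j A_j` and `T = ∑ t^j B_j` satisfy `S = 1 + ε t [α, S β T]` and
`T S = 1` as formal power series in `t`. All operators are estimated by the order in `t` of their
norm (`NormO`), uniformly in `k`; the coefficients `A_j`, `B_j` are bounded because `α`, `ε` are.

With `S_m`, `T_m` the truncations at order `m`, the estimate `Q - S_m = O(t^(m+1))` is proved by
induction on `m`. The case `m = 0` is the assumption `P ∈ B_k(C)`, which also makes `Q⁻¹` bounded.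
From `Q - S_m = O(t^(m+1))`, the identity
`Q⁻¹ - T_m = ((1 - T_m S_m) - T_m (Q - S_m)) Q⁻¹` gives `Q⁻¹ - T_m = O(t^(m+1))`; hence
`Q β Q⁻¹ - S_m β T_m = O(t^(m+1))`, and the extra factor `t` in the equation gains one order
(`NormO.step`). Products of truncations agree with truncated Cauchy products to the order
needed by `NormO.cauchy`. Any positive `C₀` works.
-/

open Filter Asymptotics Finset

section

variable {W : ℕ → Type*} [∀ k, NormedRing (W k)]

/-- `NormO m X`: the family `X k` of elements of (varying) normed rings has norm `O(k⁻ᵐ)`. -/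
def NormO (m : ℕ) (X : ∀ k, W k) : Prop :=
  (fun k => ‖X k‖) =O[atTop] (fun k : ℕ => ((k : ℝ) ^ m)⁻¹)

namespace NormO

theorem of_le {m : ℕ} {X : ∀ k, W k} {f : ℕ → ℝ} (h : ∀ᶠ k in atTop, ‖X k‖ ≤ f k)
    (hf : f =O[atTop] (fun k : ℕ => ((k : ℝ) ^ m)⁻¹)) : NormO m X :=
  (IsBigO.of_bound 1 (by
    filter_upwards [h] with k hk
    rw [norm_norm, one_mul]
    exact hk.trans (le_abs_self _))).trans hf

theorem congr' {m : ℕ} {X Y : ∀ k, W k} (hX : NormO m X) (h : ∀ᶠ k in atTop, X k = Y k) :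
    NormO m Y :=
  of_le (h.mono fun k hk => by rw [hk]) hX

theorem mono {m l : ℕ} (hl : l ≤ m) {X : ∀ k, W k} (hX : NormO m X) : NormO l X := by
  refine IsBigO.trans hX (IsBigO.of_bound 1 ?_)
  filter_upwards [eventually_ge_atTop 1] with k hk
  have hk' : (1 : ℝ) ≤ k := by exact_mod_cast hk
  rw [one_mul, Real.norm_of_nonneg (by positivity), Real.norm_of_nonneg (by positivity)]
  gcongr

theorem of_bdd {X : ∀ k, W k} (c : ℝ) (h : ∀ᶠ k in atTop, ‖X k‖ ≤ c) : NormO 0 X :=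
  of_le h (by simpa using isBigO_const_const c (one_ne_zero (α := ℝ)) atTop)

theorem add {m : ℕ} {X Y : ∀ k, W k} (hX : NormO m X) (hY : NormO m Y) :
    NormO m (fun k => X k + Y k) :=
  of_le (.of_forall fun _ => norm_add_le _ _) (IsBigO.add hX hY)

theorem neg {m : ℕ} {X : ∀ k, W k} (hX : NormO m X) : NormO m (fun k => -X k) :=
  of_le (.of_forall fun _ => (norm_neg _).le) hX

theorem sub {m : ℕ} {X Y : ∀ k, W k} (hX : NormO m X) (hY : NormO m Y) :
    NormO m (fun k => X k - Y k) :=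
  of_le (.of_forall fun _ => norm_sub_le _ _) (IsBigO.add hX hY)

theorem mul {a b : ℕ} {X Y : ∀ k, W k} (hX : NormO a X) (hY : NormO b Y) :
    NormO (a + b) (fun k => X k * Y k) :=
  of_le (.of_forall fun _ => norm_mul_le _ _)
    ((IsBigO.mul hX hY).congr_right fun k => by rw [pow_add, mul_inv])

theorem mul_left {m : ℕ} {X Y : ∀ k, W k} (hX : NormO 0 X) (hY : NormO m Y) :
    NormO m (fun k => X k * Y k) := by
  simpa using hX.mul hY

theorem mul_right {m : ℕ} {X Y : ∀ k, W k} (hX : NormO m X) (hY : NormO 0 Y) :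
    NormO m (fun k => X k * Y k) :=
  hX.mul hY

theorem sum {ι : Type*} {m : ℕ} (s : Finset ι) {X : ι → ∀ k, W k}
    (h : ∀ i ∈ s, NormO m (X i)) : NormO m (fun k => ∑ i ∈ s, X i k) :=
  of_le (.of_forall fun _ => norm_sum_le _ _) (IsBigO.fun_sum h)

theorem comm {m : ℕ} {a X : ∀ k, W k} (ha : NormO 0 a) (hX : NormO m X) :
    NormO m (fun k => a k * X k - X k * a k) :=
  (ha.mul_left hX).sub (hX.mul_right ha)

variable [∀ k, NormedAlgebra ℝ (W k)]

theorem smul {m : ℕ} {X : ∀ k, W k} (hX : NormO m X) {r : ℕ → ℝ} (c : ℝ)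
    (hr : ∀ k, |r k| ≤ c) : NormO m (fun k => r k • X k) := by
  refine of_le (f := fun k => c * ‖X k‖) (.of_forall fun k => ?_) (IsBigO.const_mul_left hX c)
  rw [norm_smul]
  exact mul_le_mul_of_nonneg_right (hr k) (norm_nonneg _)

theorem pow_smul {m : ℕ} {X : ∀ k, W k} (hX : NormO m X) (j : ℕ) :
    NormO (m + j) (fun k => ((k : ℝ) ^ j)⁻¹ • X k) := by
  refine of_le (f := fun k => ‖X k‖ * ((k : ℝ) ^ j)⁻¹) (.of_forall fun k => ?_)
    ((IsBigO.mul hX (isBigO_refl _ _)).congr_right fun k => by rw [pow_add, mul_inv])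
  rw [norm_smul, Real.norm_of_nonneg (by positivity), mul_comm]

theorem trunc {X : ℕ → ∀ k, W k} (hX : ∀ j, NormO 0 (X j)) (n : ℕ) :
    NormO 0 (fun k => ∑ j ∈ range n, ((k : ℝ) ^ j)⁻¹ • X j k) :=
  sum _ fun j _ => ((hX j).pow_smul j).mono (Nat.zero_le _)

/-- The product of two polynomials in `k⁻¹` of degree `< n` with bounded coefficients agrees with
the truncation of its Cauchy product up to `O(k⁻ⁿ)`: only the terms `k^(-i-l)` with `i + l ≥ n`
remain. -/
theorem cauchy {X Y : ℕ → ∀ k, W k} (hX : ∀ j, NormO 0 (X j)) (hY : ∀ j, NormO 0 (Y j)) (n : ℕ) :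
    NormO n (fun k => (∑ j ∈ range n, ((k : ℝ) ^ j)⁻¹ • X j k) *
        (∑ j ∈ range n, ((k : ℝ) ^ j)⁻¹ • Y j k) -
      ∑ j ∈ range n, ((k : ℝ) ^ j)⁻¹ • ∑ i ∈ range (j + 1), X i k * Y (j - i) k) := by
  have key : NormO n (fun k => ∑ i ∈ range n, ∑ l ∈ Ico (n - i) n,
      ((k : ℝ) ^ (i + l))⁻¹ • (X i k * Y l k)) := by
    refine sum _ fun i _ => sum _ fun l hl => ?_
    refine (((hX i).mul_left (hY l)).pow_smul (i + l)).mono ?_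
    have := (mem_Ico.1 hl).1
    omega
  refine key.congr' (.of_forall fun k => ?_)
  have h1 : ∑ j ∈ range n, ((k : ℝ) ^ j)⁻¹ • ∑ i ∈ range (j + 1), X i k * Y (j - i) k =
      ∑ i ∈ range n, ∑ l ∈ range (n - i), ((k : ℝ) ^ (i + l))⁻¹ • (X i k * Y l k) := by
    rw [← sum_range_diag_flip n fun i l => ((k : ℝ) ^ (i + l))⁻¹ • (X i k * Y l k)]
    refine sum_congr rfl fun j _ => ?_
    rw [smul_sum]
    refine sum_congr rfl fun i hi => ?_
    rw [Nat.add_sub_cancel' (Nat.lt_succ_iff.1 (mem_range.1 hi))]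
  rw [h1, sum_mul_sum, ← sum_sub_distrib]
  refine sum_congr rfl fun i _ => ?_
  rw [eq_sub_iff_add_eq, add_comm, sum_range_add_sum_Ico _ (Nat.sub_le n i)]
  refine sum_congr rfl fun l _ => ?_
  rw [smul_mul_smul_comm, pow_add, mul_inv]

variable {α β q qi : ∀ k, W k} {ε : ℕ → ℝ} {A B : ℕ → ∀ k, W k}

/-- The coefficients `A_j`, `B_j` of the formal solution are bounded uniformly in `k`. -/
theorem coeff (h1 : NormO 0 (fun k => (1 : W k))) (hα : NormO 0 α) (hβ : NormO 0 β)
    (E : ℝ) (hε : ∀ k, |ε k| ≤ E)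
    (hA0 : ∀ k, A 0 k = 1) (hB0 : ∀ k, B 0 k = 1)
    (hA : ∀ k j, A (j + 1) k = ε k • ∑ i ∈ range (j + 1),
      (α k * (A i k * β k * B (j - i) k) - (A i k * β k * B (j - i) k) * α k))
    (hB : ∀ k j, B (j + 1) k = -∑ i ∈ range (j + 1), B i k * A (j + 1 - i) k) (j : ℕ) :
    NormO 0 (A j) ∧ NormO 0 (B j) := by
  induction j using Nat.strong_induction_on with
  | _ j ih =>
    rcases j with _ | j
    · exact ⟨h1.congr' (.of_forall fun k => (hA0 k).symm),
        h1.congr' (.of_forall fun k => (hB0 k).symm)⟩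
    · have hAj : NormO 0 (A (j + 1)) := by
        refine NormO.congr' (NormO.smul (sum (range (j + 1)) fun i hi => ?_) E hε)
          (.of_forall fun k => (hA k j).symm)
        have := mem_range.1 hi
        exact hα.comm (((ih i this).1.mul_right hβ).mul_right (ih (j - i) (by omega)).2)
      refine ⟨hAj, NormO.congr' (NormO.neg (sum (range (j + 1)) fun i hi => ?_))
          (.of_forall fun k => (hB k j).symm)⟩
      have hi' := mem_range.1 hi
      refine (ih i hi').2.mul_right ?_
      rcases i with _ | i
      · exact hAj
      · exact (ih (j + 1 - (i + 1)) (by omega)).1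

/-- An approximation of `q` by the truncation of `A` gives one of `q⁻¹` by that of `B`. -/
theorem inv_sub (hA : ∀ j, NormO 0 (A j)) (hBb : ∀ j, NormO 0 (B j))
    (hA0 : ∀ k, A 0 k = 1) (hB0 : ∀ k, B 0 k = 1)
    (hB : ∀ k j, B (j + 1) k = -∑ i ∈ range (j + 1), B i k * A (j + 1 - i) k)
    (hqi : NormO 0 qi) (hinv : ∀ᶠ k in atTop, q k * qi k = 1) (m : ℕ)
    (hq : NormO (m + 1) (fun k => q k - ∑ j ∈ range (m + 1), ((k : ℝ) ^ j)⁻¹ • A j k)) :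
    NormO (m + 1) (fun k => qi k - ∑ j ∈ range (m + 1), ((k : ℝ) ^ j)⁻¹ • B j k) := by
  have hc := cauchy hBb hA (m + 1)
  -- The Cauchy product of `B` and `A` is the constant series `1`.
  have hone : ∀ k : ℕ, ∑ j ∈ range (m + 1), ((k : ℝ) ^ j)⁻¹ •
      ∑ i ∈ range (j + 1), B i k * A (j - i) k = 1 := by
    intro k
    rw [sum_range_succ']
    have : ∀ j, ∑ i ∈ range (j + 1 + 1), B i k * A (j + 1 - i) k = 0 := by
      intro j
      rw [sum_range_succ, Nat.sub_self, hA0, mul_one, hB, add_neg_cancel]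
    simp [this, hA0, hB0]
  refine NormO.congr' (((hc.add ((trunc hBb (m + 1)).mul_left hq)).neg).mul_right hqi) ?_
  filter_upwards [hinv] with k hk
  rw [hone k, mul_sub, neg_mul, add_mul, sub_mul _ _ (qi k), sub_mul _ _ (qi k), one_mul,
    mul_assoc _ (q k), hk, mul_one]
  abel

/-- One step of the induction: the equation for `q` gains one order of precision. -/
theorem step (hα : NormO 0 α) (hβ : NormO 0 β) (E : ℝ) (hε : ∀ k, |ε k| ≤ E)
    (hAb : ∀ j, NormO 0 (A j)) (hBb : ∀ j, NormO 0 (B j))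
    (hA0 : ∀ k, A 0 k = 1)
    (hA : ∀ k j, A (j + 1) k = ε k • ∑ i ∈ range (j + 1),
      (α k * (A i k * β k * B (j - i) k) - (A i k * β k * B (j - i) k) * α k))
    (hqi : NormO 0 qi)
    (heq : ∀ᶠ k in atTop, q k = 1 + (ε k * (k : ℝ)⁻¹) •
      (α k * (q k * β k * qi k) - (q k * β k * qi k) * α k)) (m : ℕ)
    (hq : NormO (m + 1) (fun k => q k - ∑ j ∈ range (m + 1), ((k : ℝ) ^ j)⁻¹ • A j k))
    (hqi' : NormO (m + 1) (fun k => qi k - ∑ j ∈ range (m + 1), ((k : ℝ) ^ j)⁻¹ • B j k)) :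
    NormO (m + 2) (fun k => q k - ∑ j ∈ range (m + 2), ((k : ℝ) ^ j)⁻¹ • A j k) := by
  have hc := cauchy (fun j => (hAb j).mul_right hβ) hBb (m + 1)
  have hd := (hq.mul_right hβ).mul_right hqi
  have he := ((trunc hAb (m + 1)).mul_right hβ).mul_left hqi'
  have hf := ((hα.comm ((hd.add he).add hc)).pow_smul 1).smul E hε
  refine hf.congr' ?_
  filter_upwards [heq] with k hk
  have hS : ∑ j ∈ range (m + 2), ((k : ℝ) ^ j)⁻¹ • A j k = 1 + (ε k * (k : ℝ)⁻¹) •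
      (α k * (∑ j ∈ range (m + 1), ((k : ℝ) ^ j)⁻¹ •
          ∑ i ∈ range (j + 1), A i k * β k * B (j - i) k) -
        (∑ j ∈ range (m + 1), ((k : ℝ) ^ j)⁻¹ •
          ∑ i ∈ range (j + 1), A i k * β k * B (j - i) k) * α k) := by
    rw [sum_range_succ', hA0, pow_zero, inv_one, one_smul, add_comm, mul_sum, sum_mul,
      ← sum_sub_distrib, smul_sum]
    congr 1
    refine sum_congr rfl fun j _ => ?_
    rw [hA, mul_smul_comm, smul_mul_assoc, ← smul_sub, mul_sum, sum_mul, ← sum_sub_distrib,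
      smul_smul, smul_smul, pow_succ, mul_inv]
    congr 1
    ring
  have hT : ∑ j ∈ range (m + 1), ((k : ℝ) ^ j)⁻¹ • (A j k * β k) =
      (∑ j ∈ range (m + 1), ((k : ℝ) ^ j)⁻¹ • A j k) * β k := by
    simp only [sum_mul, smul_mul_assoc]
  rw [hS, hT]
  conv_rhs => rw [hk]
  rw [pow_one, smul_smul, add_sub_add_left_eq_sub, ← smul_sub]
  congr 1
  noncomm_ring

/-- The expansion to every order, for an element `q` with right inverse `qi`. -/
theorem expansion (h1 : NormO 0 (fun k => (1 : W k))) (hα : NormO 0 α) (hβ : NormO 0 β)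
    (E : ℝ) (hε : ∀ k, |ε k| ≤ E)
    (hA0 : ∀ k, A 0 k = 1) (hB0 : ∀ k, B 0 k = 1)
    (hA : ∀ k j, A (j + 1) k = ε k • ∑ i ∈ range (j + 1),
      (α k * (A i k * β k * B (j - i) k) - (A i k * β k * B (j - i) k) * α k))
    (hB : ∀ k j, B (j + 1) k = -∑ i ∈ range (j + 1), B i k * A (j + 1 - i) k)
    (hq : NormO 1 (fun k => q k - 1)) (hinv : ∀ᶠ k in atTop, q k * qi k = 1)
    (heq : ∀ᶠ k in atTop, q k = 1 + (ε k * (k : ℝ)⁻¹) •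
      (α k * (q k * β k * qi k) - (q k * β k * qi k) * α k)) (m : ℕ) :
    NormO (m + 1) (fun k => q k - ∑ j ∈ range (m + 1), ((k : ℝ) ^ j)⁻¹ • A j k) := by
  have hAB := coeff h1 hα hβ E hε hA0 hB0 hA hB
  have hAb := fun j => (hAB j).1
  have hBb := fun j => (hAB j).2
  -- `‖q - 1‖ ≤ 1/2` eventually, and `q⁻¹ = 1 - (q - 1) q⁻¹`, so that `‖q⁻¹‖ ≤ 2 ‖1‖`.
  have hqi : NormO 0 qi := by
    have hlim : Tendsto (fun k => ‖q k - 1‖) atTop (nhds 0) :=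
      IsBigO.trans_tendsto hq (by simpa using tendsto_inv_atTop_nhds_zero_nat (𝕜 := ℝ))
    refine of_le (f := fun k => 2 * ‖(1 : W k)‖) ?_ (IsBigO.const_mul_left h1 2)
    filter_upwards [hinv, hlim.eventually_le_const (show (0 : ℝ) < 1 / 2 by norm_num)] with k hk hs
    have e : qi k = 1 - (q k - 1) * qi k := by rw [sub_mul, hk, one_mul, sub_sub_cancel]
    have h2 : ‖qi k‖ ≤ ‖(1 : W k)‖ + ‖q k - 1‖ * ‖qi k‖ :=
      calc ‖qi k‖ = ‖1 - (q k - 1) * qi k‖ := congrArg norm e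
        _ ≤ _ := (norm_sub_le _ _).trans (by gcongr; exact norm_mul_le _ _)
    nlinarith [norm_nonneg (qi k)]
  induction m with
  | zero => simpa [hA0] using hq
  | succ m ih =>
    exact step hα hβ E hε hAb hBb hA0 hA hqi heq m ih
      (inv_sub hAb hBb hA0 hB0 hB hqi hinv m ih)

end NormO

end

/-- In the Setup (see hypotheses), fix `N ≥ 1`.  There exists `C₀ > 0`,
depending only on `N, M, E, c₁, c₂, n`, such that for every `C ≥ C₀`: whenever a family
`P k` lies in `B_k(C)`, is invertible and satisfies
`P k = (χ k)⁻¹ • (Id + ε k · k⁻¹ · [α k, P k ⬝ β k ⬝ (P k)⁻¹])` for all sufficiently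
large `k` (with `β k = (α k)*`), there are `D > 0` and `k₀` with
`‖χ k • P k − Σ_{j=0}^{N} k^{−j} • A k j‖ ≤ D·k^{−N−1}` for all `k ≥ k₀`. -/
theorem stmt6 (V : ℕ → Type*) [∀ k, NormedAddCommGroup (V k)]
    [∀ k, InnerProductSpace ℂ (V k)] [∀ k, FiniteDimensional ℂ (V k)]
    (α : ∀ k, V k →L[ℂ] V k) (M : ℝ) (hM : 0 < M) (hα : ∀ k, ‖α k‖ ≤ M)
    (n : ℕ) (hn : 1 ≤ n) (c₁ c₂ E : ℝ) (hc₁ : 0 < c₁) (hc₂ : 0 < c₂) (hE : 0 < E)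
    (χ : ℕ → ℝ) (hχ : ∀ k : ℕ, 0 < k → c₁ * (k : ℝ) ^ n ≤ χ k ∧ χ k ≤ c₂ * (k : ℝ) ^ n)
    (ε : ℕ → ℝ) (hε : ∀ k, 0 < ε k ∧ ε k ≤ E)
    (A B : ∀ k : ℕ, ℕ → (V k →L[ℂ] V k))
    (hA0 : ∀ k, A k 0 = 1) (hB0 : ∀ k, B k 0 = 1)
    (hArec : ∀ k j, A k (j + 1) = ε k • ∑ i ∈ Finset.range (j + 1),
      (α k * (A k i * ContinuousLinearMap.adjoint (α k) * B k (j - i)) -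
        (A k i * ContinuousLinearMap.adjoint (α k) * B k (j - i)) * α k))
    (hBrec : ∀ k j, B k (j + 1) = -∑ i ∈ Finset.range (j + 1), B k i * A k (j + 1 - i))
    (N : ℕ) (hN : 1 ≤ N) :
    ∃ C₀ : ℝ, 0 < C₀ ∧ ∀ C : ℝ, C ≥ C₀ → ∀ P : (∀ k : ℕ, V k →L[ℂ] V k),
      (∃ k₁ : ℕ, ∀ k ≥ k₁, 0 < k ∧ ‖χ k • P k - 1‖ ≤ C * (k : ℝ)⁻¹ ∧ IsUnit (P k) ∧
        P k = (χ k)⁻¹ • (1 + (ε k * (k : ℝ)⁻¹) •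
          (α k * (P k * ContinuousLinearMap.adjoint (α k) * Ring.inverse (P k)) -
            (P k * ContinuousLinearMap.adjoint (α k) * Ring.inverse (P k)) * α k))) →
      ∃ D : ℝ, 0 < D ∧ ∃ k₀ : ℕ, ∀ k ≥ k₀,
        ‖χ k • P k - ∑ j ∈ Finset.range (N + 1), ((k : ℝ) ^ j)⁻¹ • A k j‖ ≤
          D * ((k : ℝ) ^ (N + 1))⁻¹ := by
  refine ⟨1, one_pos, fun C _ P hP => ?_⟩
  obtain ⟨k₁, hP⟩ := hP
  have hP' := eventually_atTop.2 ⟨k₁, hP⟩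
  have hχ0 : ∀ k : ℕ, 0 < k → χ k ≠ 0 := fun k hk =>
    (lt_of_lt_of_le (by positivity) (hχ k hk).1).ne'
  have main := NormO.expansion (W := fun k => V k →L[ℂ] V k) (α := α)
    (β := fun k => ContinuousLinearMap.adjoint (α k)) (q := fun k => χ k • P k)
    (qi := fun k => (χ k)⁻¹ • Ring.inverse (P k)) (ε := ε)
    (A := fun j k => A k j) (B := fun j k => B k j)
    (NormO.of_bdd 1 (.of_forall fun k => ContinuousLinearMap.norm_id_le))
    (NormO.of_bdd M (.of_forall hα))
    (NormO.of_bdd M (.of_forall fun k => by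
      rw [LinearIsometryEquiv.norm_map]; exact hα k))
    E (fun k => by rw [abs_of_pos (hε k).1]; exact (hε k).2) hA0 hB0 hArec hBrec
    (NormO.of_le (hP'.mono fun k hk => hk.2.1)
      ((isBigO_refl _ _).const_mul_left C |>.congr_right fun k => by rw [pow_one]))
    (by
      filter_upwards [hP'] with k hk
      rw [smul_mul_smul_comm, mul_inv_cancel₀ (hχ0 k hk.1), one_smul,
        Ring.mul_inverse_cancel _ hk.2.2.1])
    (by
      filter_upwards [hP'] with k hk
      have h := hχ0 k hk.1
      have e : χ k • P k * ContinuousLinearMap.adjoint (α k) * (χ k)⁻¹ • Ring.inverse (P k) =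
          P k * ContinuousLinearMap.adjoint (α k) * Ring.inverse (P k) := by
        rw [smul_mul_assoc, smul_mul_smul_comm, mul_inv_cancel₀ h, one_smul]
      rw [e]
      conv_lhs => rw [hk.2.2.2]
      rw [smul_smul, mul_inv_cancel₀ h, one_smul])
    N
  obtain ⟨D, hD, hb⟩ := IsBigO.exists_pos main
  obtain ⟨k₀, hk₀⟩ := eventually_atTop.1 hb.bound
  refine ⟨D, hD, k₀, fun k hk => ?_⟩
  have := hk₀ k hk
  rwa [norm_norm, Real.norm_of_nonneg (by positivity)] at this
end
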